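/- arXiv:2206.06742 — 2 statements merged into one kernel-verified Lean document; each statement's English description precedes it below -/
import Mathlib

section
/- Let λ₁ ∈ ℝ and let φ : S^{N−1} → ℝ be such that the 0-homogeneous extension Φ(x) = φ(x/|x|) is C² on the open cone C_Ω and satisfies ΔΦ(x) = −λ₁|x|^{−2}Φ(x) for all x ∈ C_Ω. Set μ = λ₁ + ((N−2)/2)² and γ_* = (2−N)/2. Then for every σ > 0 and every τ ∈ ℝ, the function u(x) = Φ(x)·|x|^{γ_*}·(log(σ|x|))^τ satisfies −Δu(x) − μ|x|^{−2}u(x) = τ(1−τ)·Φ(x)·|x|^{γ_*−2}·(log(σ|x|))^{τ−2} for all x ∈ C_Ω with σ|x| > 1. -/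
open MeasureTheory Real Set
open scoped ENNReal NNReal

noncomputable section

/-- Euclidean space `ℝ^N`. -/
abbrev Euc (N : ℕ) := EuclideanSpace ℝ (Fin N)

/-- The Euclidean Laplacian `Δu(x) = ∑ ∂²u/∂xᵢ²(x)`, the trace of the Hessian. -/
def lap (N : ℕ) (u : Euc N → ℝ) (x : Euc N) : ℝ :=
  ∑ i : Fin N,
    iteratedFDeriv ℝ 2 u x ![EuclideanSpace.single i 1, EuclideanSpace.single i 1]

/-- The open cone `C_Ω^ρ = {x : |x| > ρ, x/|x| ∈ Ω}`. -/
def coneGT (N : ℕ) (ρ : ℝ) (Ω : Set (Euc N)) : Set (Euc N) :=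
  {x | ρ < ‖x‖ ∧ ‖x‖⁻¹ • x ∈ Ω}

/-- The full open cone `C_Ω = {x ≠ 0 : x/|x| ∈ Ω}`. -/
def cone (N : ℕ) (Ω : Set (Euc N)) : Set (Euc N) :=
  {x | x ≠ 0 ∧ ‖x‖⁻¹ • x ∈ Ω}

/-- `Ω` is a nonempty, connected, relatively open subset of the unit sphere `S^{N-1}`. -/
def IsConeDomain (N : ℕ) (Ω : Set (Euc N)) : Prop :=
  Ω ⊆ Metric.sphere (0 : Euc N) 1 ∧ IsConnected Ω ∧
    IsOpen {ω : Metric.sphere (0 : Euc N) 1 | (ω : Euc N) ∈ Ω}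

/-- The convolution `(|x|^{-α} * f)(x) = ∫_{C_Ω^ρ} f(y)|x-y|^{-α} dy`, valued in `[0,∞]`. -/
def rieszConv (N : ℕ) (α ρ : ℝ) (Ω : Set (Euc N)) (f : Euc N → ℝ) (x : Euc N) : ℝ≥0∞ :=
  ∫⁻ y in coneGT N ρ Ω, ENNReal.ofReal (f y * ‖x - y‖ ^ (-α))

/-- Dirichlet eigenpair hypothesis for `(Ω, λ₁, φ)`: `φ` is continuous on the closure of `Ω`,
positive on `Ω`, vanishing on the relative boundary, with maximum `1`, and its 0-homogeneous
extension `Φ(x) = φ(x/|x|)` is `C²` on the open cone and satisfies `ΔΦ = -λ₁|x|⁻²Φ`. -/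
structure DirichletEigenpair (N : ℕ) (Ω : Set (Euc N)) (lam1 : ℝ) (φ : Euc N → ℝ) : Prop where
  contOn : ContinuousOn φ (closure Ω)
  pos : ∀ ω ∈ Ω, 0 < φ ω
  bdryZero : ∀ ω ∈ closure Ω \ Ω, φ ω = 0
  le_one : ∀ ω ∈ closure Ω, φ ω ≤ 1
  max_one : ∃ ω ∈ closure Ω, φ ω = 1
  smoothExt : ContDiffOn ℝ 2 (fun x => φ (‖x‖⁻¹ • x)) (cone N Ω)
  eigen : ∀ x ∈ cone N Ω,
    lap N (fun y => φ (‖y‖⁻¹ • y)) x = -lam1 * ‖x‖ ^ (-(2:ℝ)) * φ (‖x‖⁻¹ • x)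

/-- The Hardy constant `C_{H,Ω} = λ₁ + ((N-2)/2)²`. -/
def CHconst (N : ℕ) (lam1 : ℝ) : ℝ := lam1 + (((N : ℝ) - 2) / 2) ^ 2

/-- The smaller root `γ_*` of `γ(γ + N - 2) = λ₁ - μ`. -/
def gammaStar (N : ℕ) (lam1 μ : ℝ) : ℝ :=
  (-((N : ℝ) - 2) - Real.sqrt (((N : ℝ) - 2) ^ 2 + 4 * (lam1 - μ))) / 2

/-- A positive (classical) solution of `(E) : -Δu - μ|x|⁻²u ≥ (|x|^{-α} * uᵖ) u^q` in `C_Ω^ρ`. -/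
def IsPosSolE (N : ℕ) (ρ μ α p q : ℝ) (Ω : Set (Euc N)) (u : Euc N → ℝ) : Prop :=
  ContDiffOn ℝ 2 u (coneGT N ρ Ω) ∧
  ContinuousOn u (closure (coneGT N ρ Ω)) ∧
  (∀ x ∈ coneGT N ρ Ω, 0 < u x) ∧
  (∀ x ∈ coneGT N ρ Ω, rieszConv N α ρ Ω (fun y => u y ^ p) x < ⊤) ∧
  (∀ x ∈ coneGT N ρ Ω,
    (rieszConv N α ρ Ω (fun y => u y ^ p) x).toReal * u x ^ q ≤
      -lap N u x - μ * ‖x‖ ^ (-(2:ℝ)) * u x)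

/-- A positive solution of `(Z) : -Δu - μ|x|⁻²u ≥ (∫_{C_Ω^ρ} uᵖ) u^q` in `C_Ω^ρ`. -/
def IsPosSolZ (N : ℕ) (ρ μ p q : ℝ) (Ω : Set (Euc N)) (u : Euc N → ℝ) : Prop :=
  ContDiffOn ℝ 2 u (coneGT N ρ Ω) ∧
  ContinuousOn u (closure (coneGT N ρ Ω)) ∧
  (∀ x ∈ coneGT N ρ Ω, 0 < u x) ∧
  (∫⁻ y in coneGT N ρ Ω, ENNReal.ofReal (u y ^ p)) < ⊤ ∧
  (∀ x ∈ coneGT N ρ Ω,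
    (∫⁻ y in coneGT N ρ Ω, ENNReal.ofReal (u y ^ p)).toReal * u x ^ q ≤
      -lap N u x - μ * ‖x‖ ^ (-(2:ℝ)) * u x)

/-- A positive solution `(u, v)` of the system `(S)` in `C_Ω^ρ`. -/
def IsPosSolS (N : ℕ) (ρ μ α p q s : ℝ) (Ω : Set (Euc N)) (u v : Euc N → ℝ) : Prop :=
  ContDiffOn ℝ 2 u (coneGT N ρ Ω) ∧ ContinuousOn u (closure (coneGT N ρ Ω)) ∧
  ContDiffOn ℝ 2 v (coneGT N ρ Ω) ∧ ContinuousOn v (closure (coneGT N ρ Ω)) ∧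
  (∀ x ∈ coneGT N ρ Ω, 0 < u x) ∧ (∀ x ∈ coneGT N ρ Ω, 0 < v x) ∧
  (∀ x ∈ coneGT N ρ Ω, rieszConv N α ρ Ω (fun y => v y ^ p) x < ⊤) ∧
  (∀ x ∈ coneGT N ρ Ω,
    (rieszConv N α ρ Ω (fun y => v y ^ p) x).toReal * v x ^ q ≤
      -lap N u x - μ * ‖x‖ ^ (-(2:ℝ)) * u x) ∧
  (∀ x ∈ coneGT N ρ Ω, u x ^ s ≤ -lap N v x - μ * ‖x‖ ^ (-(2:ℝ)) * v x)

open Filter Topology in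
lemma aux_mul_second {E : Type*} [NormedAddCommGroup E] [NormedSpace ℝ E] {f g : E → ℝ} {x : E}
    (hf : ContDiffAt ℝ 2 f x) (hg : ContDiffAt ℝ 2 g x) (e : E) :
    fderiv ℝ (fderiv ℝ (fun y => f y * g y)) x e e =
      f x * fderiv ℝ (fderiv ℝ g) x e e + 2 * (fderiv ℝ f x e * fderiv ℝ g x e)
        + g x * fderiv ℝ (fderiv ℝ f) x e e := by
  have hf1 : DifferentiableAt ℝ (fderiv ℝ f) x :=
    (hf.fderiv_right (m := 1) (by norm_num)).differentiableAt (by norm_num)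
  have hg1 : DifferentiableAt ℝ (fderiv ℝ g) x :=
    (hg.fderiv_right (m := 1) (by norm_num)).differentiableAt (by norm_num)
  have hf0 : DifferentiableAt ℝ f x := hf.differentiableAt (by norm_num)
  have hg0 : DifferentiableAt ℝ g x := hg.differentiableAt (by norm_num)
  have hev : fderiv ℝ (fun y => f y * g y) =ᶠ[𝓝 x]
      fun y => f y • fderiv ℝ g y + g y • fderiv ℝ f y := by
    filter_upwards [hf.eventually (by simp), hg.eventually (by simp)] with y h1 h2
    exact fderiv_fun_mul (h1.differentiableAt (by norm_num)) (h2.differentiableAt (by norm_num))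
  rw [hev.fderiv_eq]
  have h := (hf0.hasFDerivAt.smul hg1.hasFDerivAt).add (hg0.hasFDerivAt.smul hf1.hasFDerivAt)
  have h' : fderiv ℝ (fun y => f y • fderiv ℝ g y + g y • fderiv ℝ f y) x = _ := h.fderiv
  rw [h']
  simp
  ring

open Filter Topology in
lemma aux_radial_first {E : Type*} [NormedAddCommGroup E] [InnerProductSpace ℝ E]
    {G : ℝ → ℝ} {d : ℝ} {x : E} (h1 : HasDerivAt G d (‖x‖ ^ 2)) :
    HasFDerivAt (fun y : E => G (‖y‖ ^ 2)) (d • (2 • innerSL ℝ x)) x :=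
  h1.comp_hasFDerivAt x (hasStrictFDerivAt_norm_sq x).hasFDerivAt

open Filter Topology in
lemma aux_radial_second {E : Type*} [NormedAddCommGroup E] [InnerProductSpace ℝ E]
    {G G' : ℝ → ℝ} {d : ℝ} {x : E} (h1 : ∀ᶠ s in 𝓝 (‖x‖ ^ 2), HasDerivAt G (G' s) s)
    (h2 : HasDerivAt G' d (‖x‖ ^ 2)) (e : E) :
    fderiv ℝ (fderiv ℝ (fun y : E => G (‖y‖ ^ 2))) x e e =
      4 * d * (inner ℝ x e) ^ 2 + 2 * G' (‖x‖ ^ 2) * inner ℝ e e := by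
  have hc : Tendsto (fun y : E => ‖y‖ ^ 2) (𝓝 x) (𝓝 (‖x‖ ^ 2)) :=
    (continuous_norm.pow 2).tendsto x
  have hev : fderiv ℝ (fun y : E => G (‖y‖ ^ 2)) =ᶠ[𝓝 x]
      fun y => G' (‖y‖ ^ 2) • ((2 : ℕ) • innerSL ℝ y) := by
    filter_upwards [hc.eventually h1] with y hy
    exact (aux_radial_first hy).fderiv
  rw [hev.fderiv_eq]
  have hi : HasFDerivAt (fun y : E => (2 : ℕ) • innerSL ℝ y) ((2 : ℕ) • innerSL ℝ) x :=
    ((2 : ℕ) • (innerSL ℝ : E →L[ℝ] E →L[ℝ] ℝ)).hasFDerivAt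
  have h : fderiv ℝ (fun y : E => G' (‖y‖ ^ 2) • ((2 : ℕ) • innerSL ℝ y)) x = _ :=
    ((aux_radial_first h2).smul hi).fderiv
  rw [h]
  have he : ((innerSL ℝ) e) e = inner ℝ e e := rfl
  have he' : ((innerSL ℝ) x) e = inner ℝ x e := rfl
  simp only [add_apply, smul_apply,
    ContinuousLinearMap.smulRight_apply, he, he', smul_eq_mul, nsmul_eq_mul]
  push_cast
  ring

lemma aux_cone_isOpen (N : ℕ) (Ω : Set (Euc N)) (hΩ : IsConeDomain N Ω) :
    IsOpen (cone N Ω) := by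
  obtain ⟨-, -, h⟩ := hΩ
  obtain ⟨U, hU, hUe⟩ := isOpen_induced_iff.mp h
  have he : cone N Ω = {x : Euc N | x ≠ 0} ∩ (fun x : Euc N => ‖x‖⁻¹ • x) ⁻¹' U := by
    ext x
    simp only [cone, mem_ofPred_eq, mem_inter_iff, mem_preimage]
    refine and_congr_right fun hx => ?_
    have hs : ‖x‖⁻¹ • x ∈ Metric.sphere (0 : Euc N) 1 := by
      simp [norm_smul, hx]
    have := Set.ext_iff.mp hUe ⟨_, hs⟩
    simpa using this.symm
  rw [he]
  refine ContinuousOn.isOpen_inter_preimage ?_ isOpen_ne hU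
  intro x hx
  have : ‖x‖ ≠ 0 := norm_ne_zero_iff.mpr hx
  exact ((continuous_norm.continuousAt.inv₀ this).smul continuousAt_id).continuousWithinAt

open Filter Topology in
lemma aux_euler (N : ℕ) (φ : Euc N → ℝ) (x : Euc N)
    (h : DifferentiableAt ℝ (fun x => φ (‖x‖⁻¹ • x)) x) :
    fderiv ℝ (fun x => φ (‖x‖⁻¹ • x)) x x = 0 := by
  have hl : HasDerivAt (fun t : ℝ => t • x) ((1 : ℝ) • x) 1 := (hasDerivAt_id (1 : ℝ)).smul_const x
  have h' : HasFDerivAt (fun x => φ (‖x‖⁻¹ • x)) (fderiv ℝ (fun x => φ (‖x‖⁻¹ • x)) x)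
      ((1 : ℝ) • x) := by
    rw [one_smul]; exact h.hasFDerivAt
  have h1 := h'.comp_hasDerivAt (1 : ℝ) hl
  have h2 : HasDerivAt (fun _ : ℝ => φ (‖x‖⁻¹ • x)) 0 (1 : ℝ) := hasDerivAt_const _ _
  have hev : ((fun x => φ (‖x‖⁻¹ • x)) ∘ fun t : ℝ => t • x) =ᶠ[𝓝 1]
      (fun _ : ℝ => φ (‖x‖⁻¹ • x)) := by
    filter_upwards [lt_mem_nhds (show (0 : ℝ) < 1 by norm_num)] with t ht
    simp only [Function.comp, norm_smul, Real.norm_eq_abs, abs_of_pos ht, smul_smul]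
    congr 2
    field_simp
  have := h1.unique (h2.congr_of_eventuallyEq hev)
  simpa using this

lemma aux_G (a σ c s : ℝ) (hσ : 0 < σ) (hs : 0 < s) (hL : 0 < Real.log (σ ^ 2 * s) / 2) :
    HasDerivAt (fun s => s ^ a * (Real.log (σ ^ 2 * s) / 2) ^ c)
      (s ^ (a - 1) * (a * (Real.log (σ ^ 2 * s) / 2) ^ c
        + c / 2 * (Real.log (σ ^ 2 * s) / 2) ^ (c - 1))) s := by
  have h1 : HasDerivAt (fun s : ℝ => s ^ a) (a * s ^ (a - 1)) s :=
    Real.hasDerivAt_rpow_const (Or.inl hs.ne')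
  have h2 : HasDerivAt (fun s : ℝ => σ ^ 2 * s) (σ ^ 2 * 1) s :=
    (hasDerivAt_id s).const_mul _
  have h3 := ((h2.log (by positivity)).div_const 2).rpow_const (p := c) (Or.inl hL.ne')
  refine (h1.mul h3).congr_deriv ?_
  have : s ^ a = s ^ (a - 1) * s := by
    rw [Real.rpow_sub_one hs.ne']; field_simp
  rw [this]
  field_simp

/-- action of `-Δ - μ|x|⁻²`, with `μ = λ₁ + ((N-2)/2)²`, on the logarithmic
profile `Φ(x)|x|^{(2-N)/2} log^τ(σ|x|)`. -/
theorem laplacian_of_log_profile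
    (N : ℕ) (hN : 2 ≤ N) (Ω : Set (Euc N)) (hΩ : IsConeDomain N Ω)
    (lam1 : ℝ) (φ : Euc N → ℝ)
    (hsm : ContDiffOn ℝ 2 (fun x => φ (‖x‖⁻¹ • x)) (cone N Ω))
    (heig : ∀ x ∈ cone N Ω,
      lap N (fun y => φ (‖y‖⁻¹ • y)) x = -lam1 * ‖x‖ ^ (-(2:ℝ)) * φ (‖x‖⁻¹ • x)) :
    ∀ σ : ℝ, 0 < σ → ∀ τ : ℝ, ∀ x ∈ cone N Ω, 1 < σ * ‖x‖ →
      -lap N (fun y =>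
          φ (‖y‖⁻¹ • y) * ‖y‖ ^ ((2 - (N : ℝ)) / 2) * (Real.log (σ * ‖y‖)) ^ τ) x -
        (lam1 + (((N : ℝ) - 2) / 2) ^ 2) * ‖x‖ ^ (-(2:ℝ)) *
          (φ (‖x‖⁻¹ • x) * ‖x‖ ^ ((2 - (N : ℝ)) / 2) * (Real.log (σ * ‖x‖)) ^ τ) =
      τ * (1 - τ) * φ (‖x‖⁻¹ • x) * ‖x‖ ^ ((2 - (N : ℝ)) / 2 - 2) *
        (Real.log (σ * ‖x‖)) ^ (τ - 2) := by
  intro σ hσ τ x hx hσx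
  have hx0 : x ≠ 0 := hx.1
  have hr : 0 < ‖x‖ := norm_pos_iff.mpr hx0
  have hΦ : ContDiffAt ℝ 2 (fun x => φ (‖x‖⁻¹ • x)) x :=
    hsm.contDiffAt ((aux_cone_isOpen N Ω hΩ).mem_nhds hx)
  have heu := aux_euler N φ x (hΦ.differentiableAt (by norm_num))
  have heig' := heig x hx
  have hlog : ∀ y : Euc N, Real.log (σ * ‖y‖) = Real.log (σ ^ 2 * ‖y‖ ^ 2) / 2 := by
    intro y
    rw [← mul_pow, Real.log_pow]; push_cast; ring
  have hLx : 0 < Real.log (σ * ‖x‖) := Real.log_pos hσx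
  set a : ℝ := (2 - (N : ℝ)) / 4 with ha
  have hpow : ∀ b : ℝ, ∀ y : Euc N, (‖y‖ ^ 2) ^ b = ‖y‖ ^ (2 * b) := by
    intro b y
    rw [← Real.rpow_natCast_mul (norm_nonneg y)]; norm_num
  set G : ℝ → ℝ := fun s => s ^ a * (Real.log (σ ^ 2 * s) / 2) ^ τ with hG
  set G' : ℝ → ℝ := fun s => s ^ (a - 1) * (a * (Real.log (σ ^ 2 * s) / 2) ^ τ
        + τ / 2 * (Real.log (σ ^ 2 * s) / 2) ^ (τ - 1)) with hG'
  have hfun : (fun y : Euc N =>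
      φ (‖y‖⁻¹ • y) * ‖y‖ ^ ((2 - (N : ℝ)) / 2) * (Real.log (σ * ‖y‖)) ^ τ) =
      fun y => (fun x : Euc N => φ (‖x‖⁻¹ • x)) y * (fun x : Euc N => G (‖x‖ ^ 2)) y := by
    funext y
    simp only [hG]
    rw [hpow, ← hlog, mul_assoc]
    congr 4
    rw [ha]; ring
  have hev : ∀ᶠ s in nhds (‖x‖ ^ 2), 0 < s ∧ 0 < Real.log (σ ^ 2 * s) / 2 := by
    refine (lt_mem_nhds (by positivity)).and ?_
    have : ContinuousAt (fun s : ℝ => Real.log (σ ^ 2 * s) / 2) (‖x‖ ^ 2) := by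
      refine ContinuousAt.div_const (ContinuousAt.log (by fun_prop) (by positivity)) _
    refine this.eventually (lt_mem_nhds ?_)
    simp only [← hlog]; exact hLx
  have h1 : ∀ᶠ s in nhds (‖x‖ ^ 2), HasDerivAt G (G' s) s := by
    filter_upwards [hev] with s hs
    exact aux_G a σ τ s hσ hs.1 hs.2
  have hx2 := hev.self_of_nhds
  have hh1 := (aux_G (a - 1) σ τ (‖x‖ ^ 2) hσ hx2.1 hx2.2).const_mul a
  have hh2 := (aux_G (a - 1) σ (τ - 1) (‖x‖ ^ 2) hσ hx2.1 hx2.2).const_mul (τ / 2)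
  have h2 := (hh1.add hh2).congr_of_eventuallyEq (f₁ := G')
    (Filter.Eventually.of_forall fun s => by simp only [hG', Pi.add_apply]; ring)
  have hk : ContDiffAt ℝ 2 (fun x : Euc N => G (‖x‖ ^ 2)) x := by
    have hn : ContDiffAt ℝ 2 (fun y : Euc N => ‖y‖ ^ 2) x := (contDiff_norm_sq ℝ).contDiffAt
    refine ContDiffAt.mul ?_ ?_
    · exact hn.rpow_const_of_ne hx2.1.ne'
    · refine ContDiffAt.rpow_const_of_ne ?_ hx2.2.ne'
      exact ((contDiffAt_const.mul hn).log (by positivity)).div_const 2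
  have hk1 := (aux_radial_first (E := Euc N) h1.self_of_nhds).fderiv
  rw [hfun]
  have hsum1 : ∑ i : Fin N, (fderiv ℝ (fun x => φ (‖x‖⁻¹ • x)) x (EuclideanSpace.single i 1) *
      (G' (‖x‖ ^ 2) • (2 • innerSL ℝ x)) (EuclideanSpace.single i 1)) = 0 := by
    have hxs : x = ∑ i : Fin N, x i • EuclideanSpace.single i (1 : ℝ) := by
      have := (EuclideanSpace.basisFun (Fin N) ℝ).sum_repr x
      simpa using this.symm
    have : ∑ i : Fin N, x i * fderiv ℝ (fun x => φ (‖x‖⁻¹ • x)) x (EuclideanSpace.single i 1)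
        = 0 := by
      rw [← heu]
      conv_rhs => arg 2; rw [hxs]
      rw [map_sum]
      simp only [map_smul, smul_eq_mul]
    have hc : ∀ i : Fin N, fderiv ℝ (fun x => φ (‖x‖⁻¹ • x)) x (EuclideanSpace.single i 1) *
        (G' (‖x‖ ^ 2) • (2 • innerSL ℝ x)) (EuclideanSpace.single i 1) =
        2 * G' (‖x‖ ^ 2) *
          (x i * fderiv ℝ (fun x => φ (‖x‖⁻¹ • x)) x (EuclideanSpace.single i 1)) := by
      intro i
      have he : (innerSL ℝ x) (EuclideanSpace.single i 1) = x i := by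
        simp [innerSL_apply_apply, EuclideanSpace.inner_single_right]
      simp only [smul_apply, he, smul_eq_mul, nsmul_eq_mul]
      push_cast
      ring
    rw [Finset.sum_congr rfl fun i _ => hc i, ← Finset.mul_sum, this, mul_zero]
  have hsum2 : ∑ i : Fin N, (inner ℝ x (EuclideanSpace.single i (1 : ℝ))) ^ 2 = ‖x‖ ^ 2 := by
    rw [EuclideanSpace.real_norm_sq_eq]
    simp [EuclideanSpace.inner_single_right]
  have hsum3 : ∑ i : Fin N, (inner ℝ (EuclideanSpace.single i (1 : ℝ))
      (EuclideanSpace.single i (1 : ℝ)) : ℝ) = N := by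
    simp
  have hsum4 : ∑ i : Fin N, fderiv ℝ (fderiv ℝ (fun x => φ (‖x‖⁻¹ • x))) x
      (EuclideanSpace.single i 1) (EuclideanSpace.single i 1) =
      -lam1 * ‖x‖ ^ (-(2:ℝ)) * φ (‖x‖⁻¹ • x) := by
    rw [← heig']
    unfold lap
    simp only [iteratedFDeriv_two_apply, Matrix.cons_val_zero, Matrix.cons_val_one]
  unfold lap
  simp only [iteratedFDeriv_two_apply, Matrix.cons_val_zero, Matrix.cons_val_one]
  simp only [aux_mul_second hΦ hk, aux_radial_second h1 h2, hk1]
  simp only [Finset.sum_add_distrib, ← Finset.mul_sum]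
  rw [hsum1, hsum2, hsum3, hsum4]
  simp only [hG, hG', ← hlog, hpow]
  have e1 : 2 * a = (2 - (N : ℝ)) / 2 := by rw [ha]; ring
  have e2 : 2 * (a - 1) = (2 - (N : ℝ)) / 2 - 2 := by rw [ha]; ring
  have e3 : 2 * (a - 1 - 1) = (2 - (N : ℝ)) / 2 - 2 + (-2 : ℝ) := by rw [ha]; ring
  have e4 : τ - 1 - 1 = τ - 2 := by ring
  have e5 : ‖x‖ ^ ((2 - (N : ℝ)) / 2) = ‖x‖ ^ ((2 - (N : ℝ)) / 2 - 2) * ‖x‖ ^ 2 := by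
    rw [← Real.rpow_natCast, ← Real.rpow_add hr]; congr 1; push_cast; ring
  have e6 : ‖x‖ ^ (-2 : ℝ) = (‖x‖ ^ 2)⁻¹ := by
    rw [Real.rpow_neg hr.le]; norm_cast
  rw [e1, e2, e3, e4, Real.rpow_add hr, e5, e6]
  have hN4 : (N : ℝ) = 2 - 4 * a := by rw [ha]; ring
  generalize ‖x‖ ^ ((2 - (N : ℝ)) / 2 - 2) = P
  generalize Real.log (σ * ‖x‖) ^ (τ - 2) = L2
  generalize Real.log (σ * ‖x‖) ^ (τ - 1) = L1
  generalize Real.log (σ * ‖x‖) ^ τ = L0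
  rw [hN4]
  clear_value a
  field_simp
  ring
end
end

section
/- Assume 0 ≤ α < N, p, q > 0, μ ∈ ℝ, ρ > 0, and that the Dirichlet eigenpair hypothesis holds for (Ω, λ₁, φ). If p + q ≤ 1, then the inequality (E): −Δu − μ|x|^{−2}u ≥ (|x|^{−α} * u^p) u^q has no positive solution in C_Ω^ρ. -/
open MeasureTheory Real Set
open scoped ENNReal NNReal

noncomputable section

lemma integral_fderiv_zero_aux {N : ℕ} (g : Euc N → ℝ) (hg : ContDiff ℝ 1 g)
    (hc : HasCompactSupport g) (v : Euc N) :
    Integrable (fun x => fderiv ℝ g x v) ∧ ∫ x, fderiv ℝ g x v = 0 := by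
  have hint : Integrable (fun x => fderiv ℝ g x v) := by
    apply Continuous.integrable_of_hasCompactSupport
    · exact (hg.continuous_fderiv (by norm_num)).clm_apply continuous_const
    · exact hc.fderiv_apply (𝕜 := ℝ) v
  refine ⟨hint, ?_⟩
  have h := integral_mul_fderiv_eq_neg_fderiv_mul_of_integrable (μ := (volume : Measure (Euc N)))
    (f := fun _ : Euc N => (1:ℝ)) (g := g) (v := v) (by simp) (by simpa using hint)
    (by simpa using hg.continuous.integrable_of_hasCompactSupport hc)
    (fun x _ => differentiableAt_const _) (fun x _ => hg.differentiable (by norm_num) x)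
  simpa using h

lemma picone_aux {N : ℕ} (U : Set (Euc N)) (hU : IsOpen U) (u : Euc N → ℝ)
    (hu : ContDiffOn ℝ 2 u U) (hpos : ∀ x ∈ U, 0 < u x)
    (η : Euc N → ℝ) (hη : ContDiff ℝ 1 η) (hc : HasCompactSupport η) (hs : tsupport η ⊆ U) :
    ∃ H : Euc N → ℝ, Integrable H ∧ ∫ x, H x = 0 ∧
      (∀ x ∈ U, H x ≤ η x ^ 2 * (lap N u x / u x) +
        ∑ i : Fin N, (fderiv ℝ η x (EuclideanSpace.single i 1)) ^ 2) ∧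
      ∀ x, x ∉ tsupport η → H x = 0 := by
  let e : Fin N → Euc N := fun i => EuclideanSpace.single i 1
  let G : Fin N → Euc N → ℝ := fun i y => η y ^ 2 * (fderiv ℝ u y (e i) * (u y)⁻¹)
  have hduat : ∀ x ∈ U, ContDiffAt ℝ 1 (fderiv ℝ u) x := fun x hx =>
    (hu.contDiffAt (hU.mem_nhds hx)).fderiv_right (by norm_num)
  have hz : ∀ i x, x ∉ tsupport η → G i =ᶠ[nhds x] 0 := by
    intro i x hx
    filter_upwards [notMem_tsupport_iff_eventuallyEq.1 hx] with y hy
    simp only [Pi.zero_apply] at hy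
    simp [G, hy]
  have hG : ∀ i, ContDiff ℝ 1 (G i) := by
    intro i
    rw [contDiff_iff_contDiffAt]
    intro x
    by_cases hx : x ∈ tsupport η
    · have hxU := hs hx
      exact (hη.contDiffAt.pow 2).mul (((hduat x hxU).clm_apply contDiffAt_const).mul
        (((hu.contDiffAt (hU.mem_nhds hxU)).of_le (by norm_num)).inv (hpos x hxU).ne'))
    · exact contDiffAt_const.congr_of_eventuallyEq (hz i x hx)
  have hGc : ∀ i, HasCompactSupport (G i) := by
    intro i
    apply hc.mono
    intro x hx
    simp only [Function.mem_support] at hx ⊢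
    intro h0
    exact hx (by simp [G, h0])
  refine ⟨fun x => ∑ i, fderiv ℝ (G i) x (e i), ?_, ?_, ?_, ?_⟩
  · exact integrable_finsetSum _ fun i _ => (integral_fderiv_zero_aux _ (hG i) (hGc i) _).1
  · rw [integral_finsetSum _ fun i _ => (integral_fderiv_zero_aux _ (hG i) (hGc i) _).1]
    exact Finset.sum_eq_zero fun i _ => (integral_fderiv_zero_aux _ (hG i) (hGc i) _).2
  · intro x hx
    have hu0 := hpos x hx
    simp only [lap, Finset.sum_div, Finset.mul_sum]
    rw [← Finset.sum_add_distrib]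
    apply Finset.sum_le_sum
    intro i _
    rw [iteratedFDeriv_two_apply]
    have h1 : HasFDerivAt η (fderiv ℝ η x) x := (hη.differentiable (by norm_num) x).hasFDerivAt
    have h2 : HasFDerivAt u (fderiv ℝ u x) x :=
      ((hu.contDiffAt (hU.mem_nhds hx)).differentiableAt (by norm_num)).hasFDerivAt
    have h3 : HasFDerivAt (fderiv ℝ u) (fderiv ℝ (fderiv ℝ u) x) x :=
      ((hduat x hx).differentiableAt (by norm_num)).hasFDerivAt
    have h4 := h3.clm_apply (hasFDerivAt_const (e i) x)
    have h6 := (hasDerivAt_inv hu0.ne').comp_hasFDerivAt x h2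
    have h5 : HasFDerivAt (G i) _ x := (h1.pow 2).mul (h4.mul h6)
    rw [h5.fderiv]
    simp
    change _ ≤ η x ^ 2 * (fderiv ℝ (fderiv ℝ u) x (e i) (e i) / u x) + (fderiv ℝ η x (e i)) ^ 2
    generalize fderiv ℝ (fderiv ℝ u) x (e i) (e i) = w
    generalize fderiv ℝ η x (e i) = h
    generalize fderiv ℝ u x (e i) = d
    have hsq := sq_nonneg (η x * (d * (u x)⁻¹) - h)
    rw [← inv_pow, div_eq_mul_inv]
    nlinarith [hsq]
  · intro x hx
    apply Finset.sum_eq_zero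
    intro i _
    rw [(hz i x hx).fderiv_eq]
    simp

lemma conv_lower_aux {N : ℕ} (α ρ : ℝ) (hα : 0 ≤ α) (Ω : Set (Euc N)) (f : Euc N → ℝ)
    (hN : 2 ≤ N) (x : Euc N) (B : Set (Euc N)) (hB : MeasurableSet B) (hBs : B ⊆ coneGT N ρ Ω)
    (D : ℝ) (hD : 0 < D) (hxB : ∀ y ∈ B, ‖x - y‖ ≤ D) (hf : ∀ y ∈ B, 0 ≤ f y)
    (hfi : IntegrableOn f B) (hfin : rieszConv N α ρ Ω f x < ⊤) :
    D ^ (-α) * ∫ y in B, f y ≤ (rieszConv N α ρ Ω f x).toReal := by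
  have : Nontrivial (Euc N) := by
    have : Nonempty (Fin N) := ⟨⟨0, by omega⟩⟩
    infer_instance
  rw [← ENNReal.ofReal_le_iff_le_toReal hfin.ne, ← integral_const_mul,
    ofReal_integral_eq_lintegral_ofReal (hfi.const_mul _)]
  · refine le_trans ?_ (lintegral_mono_set hBs)
    apply lintegral_mono_ae
    have hne : ∀ᵐ y ∂(volume : Measure (Euc N)), y ≠ x := by
      simp [ae_iff]
    filter_upwards [ae_restrict_mem hB, ae_restrict_of_ae hne] with y hy hyx
    apply ENNReal.ofReal_le_ofReal
    rw [mul_comm]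
    apply mul_le_mul_of_nonneg_left _ (hf y hy)
    exact Real.rpow_le_rpow_of_nonpos (norm_pos_iff.2 (sub_ne_zero.2 hyx.symm)) (hxB y hy)
      (by linarith)
  · filter_upwards [ae_restrict_mem hB] with y hy
    exact mul_nonneg (Real.rpow_nonneg hD.le _) (hf y hy)

lemma isOpen_coneGT_aux {N : ℕ} {ρ : ℝ} (hρ : 0 < ρ) {Ω : Set (Euc N)} (hΩ : IsConeDomain N Ω) :
    IsOpen (coneGT N ρ Ω) := by
  obtain ⟨O, hO, hOe⟩ := isOpen_induced_iff.1 hΩ.2.2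
  have hset : coneGT N ρ Ω = {x | ρ < ‖x‖} ∩ (fun x => ‖x‖⁻¹ • x) ⁻¹' O := by
    ext x
    simp only [coneGT, mem_ofPred_eq, mem_inter_iff, mem_preimage, and_congr_right_iff]
    intro hx
    have hx0 : ‖x‖ ≠ 0 := by linarith
    have hsph : ‖x‖⁻¹ • x ∈ Metric.sphere (0 : Euc N) 1 := by
      simp [norm_smul, hx0]
    exact (Set.ext_iff.1 hOe ⟨_, hsph⟩).symm
  rw [hset]
  apply ContinuousOn.isOpen_inter_preimage _ (isOpen_lt continuous_const continuous_norm) hO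
  refine ContinuousOn.smul (f := fun x : Euc N => ‖x‖⁻¹) (g := fun x => x) ?_ continuousOn_id
  apply ContinuousOn.inv₀ continuous_norm.continuousOn
  intro x hx
  simp only [mem_ofPred_eq] at hx
  linarith

/-- Jensen type inequality. -/
lemma jensen_aux {N : ℕ} (B : Set (Euc N)) (u : Euc N → ℝ) (p q V T : ℝ) (hp : 0 < p)
    (hpq : p + q ≤ 1) (hB : MeasurableSet B) (hV : V = volume.real B) (hV0 : 0 < V)
    (hu : ∀ x ∈ B, 0 < u x) (hi : IntegrableOn (fun x => u x ^ p) B)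
    (hj : IntegrableOn (fun x => u x ^ (q - 1)) B)
    (hT : ∫ x in B, u x ^ p = V * T) (hT0 : 0 < T) (hT1 : T ≤ 1) :
    V ≤ T * ∫ x in B, u x ^ (q - 1) := by
  set s := (1 - q) / p with hs
  have hs1 : 1 ≤ s := by rw [hs, le_div_iff₀ hp]; linarith
  have hTs : 1 ≤ T * T ^ (-s) := by
    have : T * T ^ (-s) = T ^ (1 - s) := by
      rw [sub_eq_add_neg, Real.rpow_add hT0, Real.rpow_one]
    rw [this]
    exact Real.one_le_rpow_of_pos_of_le_one_of_nonpos hT0 hT1 (by linarith)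
  have hfin : volume B ≠ ⊤ := by
    intro h
    rw [Measure.real, h] at hV
    simp at hV; linarith
  have hpt : ∀ x ∈ B, T ^ (-s) * ((1 + s) - s * T⁻¹ * u x ^ p) ≤ u x ^ (q - 1) := by
    intro x hx
    have hux := hu x hx
    have hup : 0 < u x ^ p := Real.rpow_pos_of_pos hux p
    have hz : 0 < u x ^ p / T := by positivity
    have h1 : u x ^ (q - 1) = T ^ (-s) * (u x ^ p / T) ^ (-s) := by
      rw [← Real.mul_rpow hT0.le hz.le, mul_div_cancel₀ _ hT0.ne', ← Real.rpow_mul hux.le]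
      congr 1
      rw [hs]; field_simp; ring
    rw [h1]
    apply mul_le_mul_of_nonneg_left _ (Real.rpow_nonneg hT0.le _)
    rw [Real.rpow_def_of_pos hz]
    have h2 := Real.log_le_sub_one_of_pos hz
    have h3 := Real.add_one_le_exp (Real.log (u x ^ p / T) * -s)
    have h4 : s * Real.log (u x ^ p / T) ≤ s * (u x ^ p / T - 1) :=
      mul_le_mul_of_nonneg_left h2 (by linarith)
    have h5 : s * T⁻¹ * u x ^ p = s * (u x ^ p / T) := by ring
    rw [h5]; linarith
  have hci : IntegrableOn (fun _ : Euc N => (1 + s)) B := integrableOn_const hfin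
  have hint : T ^ (-s) * V ≤ ∫ x in B, u x ^ (q - 1) := by
    have : ∫ x in B, T ^ (-s) * ((1 + s) - s * T⁻¹ * u x ^ p) = T ^ (-s) * V := by
      rw [integral_const_mul, integral_sub hci (hi.const_mul _), integral_const_mul, hT,
        setIntegral_const, ← hV]
      have : s * T⁻¹ * (V * T) = s * V := by field_simp
      rw [this, smul_eq_mul]; ring
    rw [← this]
    exact setIntegral_mono_on ((hci.sub (hi.const_mul _)).const_mul _) hj hB hpt
  calc V = 1 * V := (one_mul V).symm
    _ ≤ (T * T ^ (-s)) * V := by gcongr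
    _ = T * (T ^ (-s) * V) := by ring
    _ ≤ _ := by gcongr

lemma core_aux {N : ℕ} (U : Set (Euc N)) (hU : IsOpen U) (u : Euc N → ℝ)
    (hu : ContDiffOn ℝ 2 u U) (hpos : ∀ x ∈ U, 0 < u x)
    (η : Euc N → ℝ) (hη : ContDiff ℝ 1 η) (hc : HasCompactSupport η) (hs : tsupport η ⊆ U)
    (hη1 : ∀ x, η x ^ 2 ≤ 1) (B S : Set (Euc N)) (hB : MeasurableSet B) (hS : MeasurableSet S)
    (hSfin : volume S ≠ ⊤) (hBη : ∀ x ∈ B, η x = 1) (htS : tsupport η ⊆ S)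
    (M a b q : ℝ) (hM : 0 ≤ M) (ha : 0 ≤ a) (hb : 0 ≤ b)
    (hineq : ∀ x ∈ tsupport η, M * u x ^ q ≤ -lap N u x + a * u x)
    (hgrad : ∀ x, ∑ i : Fin N, (fderiv ℝ η x (EuclideanSpace.single i 1)) ^ 2 ≤ b)
    (hj : IntegrableOn (fun x => u x ^ (q - 1)) B) :
    M * ∫ x in B, u x ^ (q - 1) ≤ (a + b) * volume.real S := by
  obtain ⟨H, hHi, hH0, hHU, hHz⟩ := picone_aux U hU u hu hpos η hη hc hs
  have hpt : ∀ x, B.indicator (fun x => M * u x ^ (q - 1)) x ≤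
      S.indicator (fun _ => a + b) x - H x := by
    intro x
    by_cases hx : x ∈ tsupport η
    · have hux := hpos x (hs hx)
      have h1 := hHU x (hs hx)
      have h2 := hineq x hx
      have h3 := hgrad x
      have hdiv : M * u x ^ (q - 1) ≤ -(lap N u x / u x) + a := by
        rw [Real.rpow_sub_one hux.ne', ← mul_div_assoc, div_le_iff₀ hux]
        have : (-(lap N u x / u x) + a) * u x = -lap N u x + a * u x := by
          field_simp
        rw [this]; exact h2
      have h4 : η x ^ 2 * (lap N u x / u x) ≤ η x ^ 2 * (a - M * u x ^ (q - 1)) :=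
        mul_le_mul_of_nonneg_left (by linarith) (sq_nonneg _)
      have h5 : η x ^ 2 * a ≤ a := mul_le_of_le_one_left ha (hη1 x)
      have h7 : 0 ≤ M * u x ^ (q - 1) := mul_nonneg hM (Real.rpow_nonneg hux.le _)
      rw [indicator_of_mem (htS hx)]
      by_cases hxB : x ∈ B
      · rw [indicator_of_mem hxB]
        rw [hBη x hxB] at h4 h1
        linarith
      · rw [indicator_of_notMem hxB]
        have h6 : 0 ≤ η x ^ 2 * (M * u x ^ (q - 1)) := mul_nonneg (sq_nonneg _) h7
        linarith
    · have hxB : x ∉ B := by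
        intro h
        apply hx
        apply subset_tsupport
        simp [hBη x h]
      rw [indicator_of_notMem hxB, hHz x hx, sub_zero]
      exact indicator_nonneg (fun _ _ => by positivity) x
  have hSi : Integrable (S.indicator (fun _ : Euc N => a + b)) :=
    (integrable_indicator_iff hS).2 (integrableOn_const hSfin)
  have := integral_mono ((integrable_indicator_iff hB).2 (hj.const_mul M)) (hSi.sub hHi) hpt
  rw [integral_indicator hB, integral_const_mul] at this
  have h8 : ∫ x, (S.indicator (fun _ : Euc N => a + b) - H) x = (a + b) * volume.real S := by
    simp only [Pi.sub_apply]
    rw [integral_sub hSi hHi, hH0, integral_indicator hS, setIntegral_const, smul_eq_mul, sub_zero,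
      mul_comm]
  rw [h8] at this
  exact this

set_option maxHeartbeats 1000000 in
/-- Step 1 of Theorem 1.1(b)(ii): if `p + q ≤ 1` then `(E)` has no positive
solution in `C_Ω^ρ`. -/
theorem no_solution_of_pq_le_one
    (N : ℕ) (hN : 2 ≤ N) (Ω : Set (Euc N)) (hΩ : IsConeDomain N Ω)
    (lam1 : ℝ) (φ : Euc N → ℝ) (hphi : DirichletEigenpair N Ω lam1 φ)
    (α p q ρ μ : ℝ) (hα : 0 ≤ α) (hαN : α < N) (hp : 0 < p) (hq : 0 < q) (hρ : 0 < ρ)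
    (hpq : p + q ≤ 1) :
    ¬ ∃ u : Euc N → ℝ, IsPosSolE N ρ μ α p q Ω u := by
  rintro ⟨u, huC, -, hpos, hfin, hE⟩
  obtain ⟨ω, hω⟩ := hΩ.2.1.nonempty
  have hωn : ‖ω‖ = 1 := by simpa using hΩ.1 hω
  have hωc : ω ∈ coneGT N (1/2) Ω := by
    refine ⟨by rw [hωn]; norm_num, ?_⟩
    simpa [hωn] using hω
  obtain ⟨ε, hε, hεb⟩ := Metric.isOpen_iff.1 (isOpen_coneGT_aux (by norm_num) hΩ) ω hωc
  set δ : ℝ := min (ε / 4) (1 / 8) with hδ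
  have hδ0 : 0 < δ := by positivity
  have hδε : δ ≤ ε / 4 := min_le_left _ _
  have hδ8 : δ ≤ 1 / 8 := min_le_right _ _
  have hUo := isOpen_coneGT_aux hρ hΩ
  let f : ContDiffBump ω := ⟨δ, 2 * δ, hδ0, by linarith⟩
  have hfC : ContDiff ℝ 1 (f : Euc N → ℝ) := f.contDiff
  have hfc : HasCompactSupport (f : Euc N → ℝ) := f.hasCompactSupport
  obtain ⟨L, hL⟩ := (hfc.fderiv (𝕜 := ℝ)).exists_bound_of_continuous
    (hfC.continuous_fderiv (by norm_num))
  let x0 : Euc N := (2 * ρ) • ω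
  have hx0n : ‖x0‖ = 2 * ρ := by
    simp [x0, norm_smul, hωn, abs_of_pos hρ]
  have hx0 : x0 ∈ coneGT N ρ Ω := by
    refine ⟨by rw [hx0n]; linarith, ?_⟩
    rw [hx0n, smul_smul, inv_mul_cancel₀ (by positivity), one_smul]
    exact hω
  set K := (rieszConv N α ρ Ω (fun y => u y ^ p) x0).toReal with hK
  have hK0 : 0 ≤ K := ENNReal.toReal_nonneg
  set v := volume.real (Metric.closedBall (0 : Euc N) 1) with hv
  have hv0 : 0 < v := by
    apply ENNReal.toReal_pos
    · exact (Metric.measure_closedBall_pos volume _ one_pos).ne'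
    · exact measure_closedBall_lt_top.ne
  set C : ℝ := 4 * |μ| + N * L ^ 2 with hC
  have hC0 : 0 ≤ C := by positivity
  set K' := (K + C * 2 ^ N + 1) * 4 ^ α / (δ ^ N * v) with hK'
  have htend : Filter.Tendsto (fun R : ℝ => R ^ ((N : ℝ) - α)) Filter.atTop Filter.atTop :=
    tendsto_rpow_atTop (by linarith)
  obtain ⟨R, hRK, hR1, hRρ⟩ := ((htend.eventually_ge_atTop K').and
    ((Filter.eventually_ge_atTop 1).and (Filter.eventually_ge_atTop (2 * ρ)))).exists
  have hR0 : 0 < R := by linarith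
  set B := Metric.closedBall (R • ω) (δ * R) with hBdef
  set S := Metric.closedBall (R • ω) (2 * δ * R) with hSdef
  set V := volume.real B with hVdef
  have hVe : V = δ ^ N * v * R ^ N := by
    rw [hVdef, hBdef, Measure.addHaar_real_closedBall' _ _ (by positivity)]
    simp only [finrank_euclideanSpace, Fintype.card_fin, mul_pow]
    ring
  have hVS : volume.real S = 2 ^ N * V := by
    rw [hVe, hSdef, Measure.addHaar_real_closedBall' _ _ (by positivity)]
    simp only [finrank_euclideanSpace, Fintype.card_fin, mul_pow]
    ring
  have hV0 : 0 < V := by rw [hVe]; positivity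
  have h4R : 0 < (4 * R) ^ α := by positivity
  have hVbig : (K + C * 2 ^ N + 1) * (4 * R) ^ α ≤ V := by
    rw [hK', div_le_iff₀ (by positivity), Real.rpow_sub hR0, Real.rpow_natCast] at hRK
    rw [hVe, Real.mul_rpow (by norm_num) hR0.le]
    have hRa : 0 < R ^ α := by positivity
    calc (K + C * 2 ^ N + 1) * (4 ^ α * R ^ α) = ((K + C * 2 ^ N + 1) * 4 ^ α) * R ^ α := by ring
      _ ≤ (R ^ N / R ^ α * (δ ^ N * v)) * R ^ α := by gcongr
      _ = δ ^ N * v * R ^ N := by field_simp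
  have hBS : B ⊆ S := Metric.closedBall_subset_closedBall (by nlinarith)
  -- membership scaling
  have hscale : ∀ x r, x ∈ Metric.closedBall (R • ω) (r * R) ↔
      R⁻¹ • x ∈ Metric.closedBall ω r := by
    intro x r
    rw [mem_closedBall_iff_norm, mem_closedBall_iff_norm]
    have : x - R • ω = R • (R⁻¹ • x - ω) := by
      rw [smul_sub, smul_smul, mul_inv_cancel₀ hR0.ne', one_smul]
    rw [this, norm_smul, Real.norm_of_nonneg hR0.le, mul_comm, mul_le_mul_iff_left₀ hR0]
  have hSn : ∀ x ∈ S, R / 2 ≤ ‖x‖ ∧ x ∈ coneGT N ρ Ω := by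
    intro x hx
    have h1 := (hscale x (2 * δ)).1 hx
    have h2 := hεb (Metric.closedBall_subset_ball (by linarith) h1)
    have h3 : ‖R⁻¹ • x‖ = R⁻¹ * ‖x‖ := by
      rw [norm_smul, Real.norm_of_nonneg (by positivity)]
    have h4 := h2.1
    rw [h3, inv_mul_eq_div, lt_div_iff₀ hR0] at h4
    refine ⟨by linarith, by linarith, ?_⟩
    have h5 := h2.2
    rw [h3, smul_smul] at h5
    convert h5 using 2
    field_simp
  have hSU : S ⊆ coneGT N ρ Ω := fun x hx => (hSn x hx).2
  have hBU := hBS.trans hSU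
  have hBc : IsCompact B := isCompact_closedBall _ _
  have hBm : MeasurableSet B := hBc.measurableSet
  have huc : ContinuousOn u B := huC.continuousOn.mono hBU
  have hpi : IntegrableOn (fun x => u x ^ p) B :=
    (huc.rpow_const fun x hx => Or.inl (hpos x (hBU hx)).ne').integrableOn_compact hBc
  have hqi : IntegrableOn (fun x => u x ^ (q - 1)) B :=
    (huc.rpow_const fun x hx => Or.inl (hpos x (hBU hx)).ne').integrableOn_compact hBc
  set A := ∫ x in B, u x ^ p with hA
  have hA0 : 0 < A := by
    rw [hA, setIntegral_pos_iff_support_of_nonneg_ae _ hpi]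
    · have : B ⊆ Function.support (fun x => u x ^ p) := fun x hx =>
        (Real.rpow_pos_of_pos (hpos x (hBU hx)) p).ne'
      rw [inter_eq_self_of_subset_right this]
      exact Metric.measure_closedBall_pos volume _ (by positivity)
    · filter_upwards [ae_restrict_mem hBm] with x hx
      exact (Real.rpow_pos_of_pos (hpos x (hBU hx)) p).le
  have hlow : ∀ x ∈ coneGT N ρ Ω, (∀ y ∈ B, ‖x - y‖ ≤ 4 * R) →
      (4 * R) ^ (-α) * A ≤ (rieszConv N α ρ Ω (fun y => u y ^ p) x).toReal := fun x hx hd =>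
    conv_lower_aux α ρ hα Ω (fun y => u y ^ p) hN x B hBm hBU (4 * R) (by positivity) hd
      (fun y hy => (Real.rpow_pos_of_pos (hpos y (hBU hy)) p).le) hpi (hfin x hx)
  have hRω : ‖R • ω‖ = R := by rw [norm_smul, hωn, mul_one, Real.norm_of_nonneg hR0.le]
  have hδR : δ * R ≤ R / 8 := by nlinarith
  have hAK : A ≤ K * (4 * R) ^ α := by
    have h := hlow x0 hx0 (by
      intro y hy
      have h1 : ‖y - R • ω‖ ≤ δ * R := mem_closedBall_iff_norm.1 hy
      have h2 : ‖x0 - y‖ ≤ ‖x0‖ + ‖R • ω‖ + ‖y - R • ω‖ := by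
        have : x0 - y = x0 - R • ω - (y - R • ω) := by abel
        rw [this]
        exact (norm_sub_le _ _).trans (by gcongr; exact norm_sub_le _ _)
      rw [hx0n, hRω] at h2
      linarith)
    rw [Real.rpow_neg (by positivity), inv_mul_eq_div, div_le_iff₀ h4R] at h
    exact h
  set T := A / V with hT
  have hT0 : 0 < T := by positivity
  have hAT : A = V * T := by rw [hT]; field_simp
  have hT1 : T ≤ 1 := by
    rw [hT, div_le_one hV0]
    refine hAK.trans (le_trans ?_ hVbig)
    gcongr
    have : 0 ≤ C * 2 ^ N := by positivity
    linarith
  have hJ := jensen_aux B u p q V T hp hpq hBm rfl hV0 (fun x hx => hpos x (hBU hx)) hpi hqi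
    hAT hT0 hT1
  -- the test function
  let η : Euc N → ℝ := fun x => f (R⁻¹ • x)
  have hηC : ContDiff ℝ 1 η := hfC.comp (contDiff_const_smul _)
  have hsupp : Function.support η ⊆ S := by
    intro x hx
    rw [hSdef, hscale]
    have : R⁻¹ • x ∈ Function.support (f : Euc N → ℝ) := hx
    rw [f.support_eq] at this
    exact Metric.ball_subset_closedBall this
  have htsupp : tsupport η ⊆ S := closure_minimal hsupp Metric.isClosed_closedBall
  have hηc : HasCompactSupport η :=
    HasCompactSupport.intro' (isCompact_closedBall (R • ω) (2 * δ * R)) Metric.isClosed_closedBall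
      (fun x hx => by
        by_contra h
        exact hx (hsupp h))
  have hη1 : ∀ x, η x ^ 2 ≤ 1 := fun x => pow_le_one₀ f.nonneg f.le_one
  have hBη : ∀ x ∈ B, η x = 1 := fun x hx => f.one_of_mem_closedBall ((hscale x δ).1 hx)
  have hgrad : ∀ x, ∑ i : Fin N, (fderiv ℝ η x (EuclideanSpace.single i 1)) ^ 2 ≤
      N * L ^ 2 / R ^ 2 := by
    intro x
    have hd : HasFDerivAt η ((fderiv ℝ f (R⁻¹ • x)).comp
        (R⁻¹ • ContinuousLinearMap.id ℝ (Euc N))) x :=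
      ((hfC.differentiable (by norm_num)) (R⁻¹ • x)).hasFDerivAt.comp x
        ((hasFDerivAt_id x).const_smul R⁻¹)
    have hi : ∀ i ∈ Finset.univ,
        (fderiv ℝ η x (EuclideanSpace.single (i : Fin N) 1)) ^ 2 ≤ L ^ 2 / R ^ 2 := by
      intro i _
      rw [hd.fderiv]
      simp only [ContinuousLinearMap.comp_apply, smul_apply,
        ContinuousLinearMap.id_apply, map_smul, smul_eq_mul, mul_pow, inv_pow]
      rw [inv_mul_eq_div]
      have h1 := (fderiv ℝ f (R⁻¹ • x)).le_of_opNorm_le (hL _) (EuclideanSpace.single i 1)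
      have h2 : ‖(EuclideanSpace.single i 1 : Euc N)‖ = 1 := by simp
      rw [h2, mul_one, Real.norm_eq_abs] at h1
      gcongr ?_ / _
      exact sq_le_sq' (by linarith [neg_abs_le (fderiv ℝ f (R⁻¹ • x) (EuclideanSpace.single i 1))])
        ((le_abs_self _).trans h1)
    refine (Finset.sum_le_sum hi).trans ?_
    simp [mul_div_assoc]
  have hineq : ∀ x ∈ tsupport η, ((4 * R) ^ (-α) * A) * u x ^ q ≤
      -lap N u x + (4 * |μ| / R ^ 2) * u x := by
    intro x hx
    obtain ⟨hxn, hxU⟩ := hSn x (htsupp hx)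
    have hux := hpos x hxU
    have h1 := hlow x hxU (by
      intro y hy
      have h1 : ‖y - R • ω‖ ≤ δ * R := mem_closedBall_iff_norm.1 hy
      have h2 : ‖x - R • ω‖ ≤ 2 * δ * R := mem_closedBall_iff_norm.1 (htsupp hx)
      have : x - y = x - R • ω - (y - R • ω) := by abel
      rw [this]
      have := norm_sub_le (x - R • ω) (y - R • ω)
      linarith)
    have h2 := hE x hxU
    have h3 : ((4 * R) ^ (-α) * A) * u x ^ q ≤ _ :=
      mul_le_mul_of_nonneg_right h1 (Real.rpow_nonneg hux.le q)
    have hxpos : 0 < ‖x‖ := by linarith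
    have h4 : -μ * ‖x‖ ^ (-(2:ℝ)) ≤ 4 * |μ| / R ^ 2 := by
      rw [Real.rpow_neg hxpos.le, Real.rpow_two]
      have h5 : (‖x‖ ^ 2)⁻¹ ≤ 4 / R ^ 2 := by
        rw [inv_le_comm₀ (by positivity) (by positivity), inv_div]
        calc R ^ 2 / 4 = (R / 2) ^ 2 := by ring
          _ ≤ ‖x‖ ^ 2 := by gcongr
      calc -μ * (‖x‖ ^ 2)⁻¹ ≤ |μ| * (‖x‖ ^ 2)⁻¹ := by gcongr; exact neg_le_abs μ
        _ ≤ |μ| * (4 / R ^ 2) := by gcongr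
        _ = _ := by ring
    have h6 := mul_le_mul_of_nonneg_right h4 hux.le
    linarith
  have hfinal := core_aux (coneGT N ρ Ω) hUo u huC hpos η hηC hηc (htsupp.trans hSU) hη1 B S hBm
    Metric.isClosed_closedBall.measurableSet measure_closedBall_lt_top.ne hBη htsupp
    ((4 * R) ^ (-α) * A) (4 * |μ| / R ^ 2) (N * L ^ 2 / R ^ 2) q (by positivity) (by positivity)
    (by positivity) hineq hgrad hqi
  rw [hVS, Real.rpow_neg (by positivity)] at hfinal
  have hCR : 4 * |μ| / R ^ 2 + N * L ^ 2 / R ^ 2 ≤ C := by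
    rw [← add_div]
    exact div_le_self hC0 (one_le_pow₀ hR1)
  have h1 : ((4 * R) ^ α)⁻¹ * (V * V) ≤ C * (2 ^ N * V) := by
    calc ((4 * R) ^ α)⁻¹ * (V * V) ≤ ((4 * R) ^ α)⁻¹ * (V * (T * ∫ x in B, u x ^ (q - 1))) := by
          gcongr
      _ = ((4 * R) ^ α)⁻¹ * A * ∫ x in B, u x ^ (q - 1) := by rw [hAT]; ring
      _ ≤ _ := hfinal
      _ ≤ _ := by gcongr
  rw [inv_mul_eq_div, div_le_iff₀ h4R] at h1
  have h2 : V ≤ C * 2 ^ N * (4 * R) ^ α := by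
    have : V * V ≤ (C * 2 ^ N * (4 * R) ^ α) * V := by linarith
    exact le_of_mul_le_mul_right this hV0
  have h3 : 0 ≤ K * (4 * R) ^ α := by positivity
  linarith
end
end
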